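/- Under the standing assumptions on the delayed system, let η > 0 and define the weight h(s) = 1 for s ∈ [t₀−g, t₀], h(s) = E_β((a₀+a₁+η)(s−t₀)^β) for s ∈ [t₀, T], and the generalized metric ϖ(x₁,x₂) = inf{ b ∈ [0,∞] : ‖x₁(t)−x₂(t)‖ ≤ b·h(t) ∀ t ∈ [t₀−g,T] } on E = C([t₀−g,T], ℝⁿ). Define the operator 𝒱 : E → E by (𝒱y)(t) = ν(t) for t ∈ [t₀−g, t₀] and (𝒱y)(t) = ν(t₀) + (1/Γ(β)) ∫_{t₀}^t (t−s)^{β−1} [A₀ y(s) + A₁ y(s−g(s)) + A₂ d(s) + f(s, y(s), y(s−g(s)), d(s))] ds for t ∈ [t₀, T]. Then 𝒱 maps E into E and is strictly contractive: ϖ(𝒱x₁, 𝒱x₂) ≤ ((a₀+a₁)/(a₀+a₁+η)) ϖ(x₁, x₂) for all x₁, x₂ ∈ E. -/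

import Mathlib

open Set ENNReal MeasureTheory intervalIntegral

/-- Euclidean `ℝⁿ`. -/
abbrev Euc (n : ℕ) := EuclideanSpace ℝ (Fin n)

/-- The Mittag-Leffler function `E_β(t) = Σ_{b ≥ 0} t^b / Γ(bβ + 1)`. -/
noncomputable def mittagLeffler (β t : ℝ) : ℝ :=
  ∑' b : ℕ, t ^ b / Real.Gamma (b * β + 1)

/-- The weight function: `h(s) = 1` for `s ≤ t₀` and `h(s) = E_β(θ (s − t₀)^β)` for `s ≥ t₀`. -/
noncomputable def weight (β t₀ θ : ℝ) (s : ℝ) : ℝ :=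
  if s ≤ t₀ then 1 else mittagLeffler β (θ * (s - t₀) ^ β)

/-- The weighted generalized metric
`ϖ(x₁, x₂) = inf { b ∈ [0, ∞] : ‖x₁(t) − x₂(t)‖ ≤ b h(t) for all t ∈ [t₀ − g, T] }`. -/
noncomputable def genDist {n : ℕ} (β t₀ T g θ : ℝ) (x₁ x₂ : ℝ → Euc n) : ℝ≥0∞ :=
  sInf {b : ℝ≥0∞ | ∀ t ∈ Icc (t₀ - g) T,
    (‖x₁ t - x₂ t‖₊ : ℝ≥0∞) ≤ b * ENNReal.ofReal (weight β t₀ θ t)}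

/-- The integral operator `𝒱`:
`(𝒱 y)(t) = ν(t)` on `[t₀ − g, t₀]` and
`(𝒱 y)(t) = ν(t₀) + (1/Γ(β)) ∫_{t₀}^t (t−s)^{β−1} [A₀ y(s) + A₁ y(s−g(s)) + A₂ d(s)
  + f(s, y(s), y(s−g(s)), d(s))] ds` on `[t₀, T]`. -/
noncomputable def Vop {n p : ℕ} (β t₀ : ℝ)
    (A₀ A₁ : Euc n →L[ℝ] Euc n) (A₂ : Euc p →L[ℝ] Euc n)
    (f : ℝ → Euc n → Euc n → Euc p → Euc n) (d : ℝ → Euc p) (gdel : ℝ → ℝ)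
    (ν : ℝ → Euc n) (y : ℝ → Euc n) : ℝ → Euc n :=
  fun t =>
    if t ≤ t₀ then ν t
    else ν t₀ + (Real.Gamma β)⁻¹ •
      ∫ s in t₀..t, ((t - s) ^ (β - 1)) •
        (A₀ (y s) + A₁ (y (s - gdel s)) + A₂ (d s) + f s (y s) (y (s - gdel s)) (d s))

/-!
The Mittag-Leffler function satisfies `θ I^β E_β(θ (· - t₀)^β) = E_β(θ (· - t₀)^β) - 1`, where `I^β`
is the Riemann–Liouville fractional integral based at `t₀`: integrate the series termwise, using
the Beta integral. Let `θ = a₀ + a₁ + η`. If `‖x₁ - x₂‖ ≤ B h` on `[t₀ - g, T]`, then, since `h`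
is monotone and the delay only looks backwards, the two integrands of `𝒱` differ by at most
`(a₀ + a₁) B h`. Applying `I^β` gains a factor `1 / θ`, so that
`‖𝒱 x₁ - 𝒱 x₂‖ ≤ (a₀ + a₁) / θ * B h`.
-/

section MittagLeffler

variable {β : ℝ}

theorem rpow_mul_exp_neg_le_Gamma_add_one {R x : ℝ} (hR : 0 < R) (hx : 0 ≤ x) :
    R ^ x * Real.exp (-R) ≤ Real.Gamma (x + 1) := by
  have hint : IntegrableOn (fun t => Real.exp (-t) * t ^ x) (Ioi 0) := by
    simpa using Real.GammaIntegral_convergent (show 0 < x + 1 by linarith)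
  calc R ^ x * Real.exp (-R) = ∫ t in Ioi R, Real.exp (-t) * R ^ x := by
        rw [MeasureTheory.integral_mul_const, integral_exp_neg_Ioi, mul_comm]
    _ ≤ ∫ t in Ioi R, Real.exp (-t) * t ^ x := by
        refine setIntegral_mono_on ((integrableOn_exp_neg_Ioi R).mul_const _)
          (hint.mono_set (Ioi_subset_Ioi hR.le)) measurableSet_Ioi fun t ht => ?_
        gcongr
        exact le_of_lt ht
    _ ≤ ∫ t in Ioi 0, Real.exp (-t) * t ^ x := by
        refine setIntegral_mono_set hint ?_ (Ioi_subset_Ioi hR.le).eventuallyLE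
        filter_upwards [ae_restrict_mem measurableSet_Ioi] with t ht
        exact mul_nonneg (Real.exp_pos _).le (Real.rpow_nonneg (le_of_lt ht) _)
    _ = Real.Gamma (x + 1) := by
        rw [Real.Gamma_eq_integral (by linarith), add_sub_cancel_right]

theorem Gamma_natCast_mul_add_one_pos (hβ : 0 < β) (b : ℕ) : 0 < Real.Gamma (b * β + 1) :=
  Real.Gamma_pos_of_pos (by positivity)

theorem summable_mittagLeffler (hβ : 0 < β) (t : ℝ) :
    Summable fun b : ℕ => t ^ b / Real.Gamma (b * β + 1) := by
  -- With `R ^ β = 2 (|t| + 1)`, the lower bound on `Γ` makes the terms `O(2 ^ (-b))`.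
  set R : ℝ := (2 * (|t| + 1)) ^ β⁻¹
  have hR : 0 < R := by positivity
  have hRβ : R ^ β = 2 * (|t| + 1) := Real.rpow_inv_rpow (by positivity) hβ.ne'
  refine (summable_geometric_two.mul_left (Real.exp R)).of_norm_bounded fun b => ?_
  have hΓ := Gamma_natCast_mul_add_one_pos hβ b
  have hlow : (2 * (|t| + 1)) ^ b * Real.exp (-R) ≤ Real.Gamma (b * β + 1) := by
    rw [← hRβ, ← Real.rpow_mul_natCast hR.le, mul_comm β]
    exact rpow_mul_exp_neg_le_Gamma_add_one hR (by positivity)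
  rw [norm_div, norm_pow, Real.norm_eq_abs, Real.norm_of_nonneg hΓ.le, div_le_iff₀ hΓ]
  calc |t| ^ b ≤ (|t| + 1) ^ b := by gcongr; linarith
    _ = Real.exp R * (1 / 2) ^ b * ((2 * (|t| + 1)) ^ b * Real.exp (-R)) := by
        rw [mul_pow, Real.exp_neg, one_div, inv_pow]
        field_simp
    _ ≤ Real.exp R * (1 / 2) ^ b * Real.Gamma (b * β + 1) := by gcongr

theorem continuous_mittagLeffler (hβ : 0 < β) : Continuous (mittagLeffler β) := by
  refine continuous_iff_continuousAt.2 fun t => ?_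
  have hcont : ContinuousOn (mittagLeffler β) (Icc (-(|t| + 1)) (|t| + 1)) := by
    refine continuousOn_tsum (fun b => by fun_prop) (summable_mittagLeffler hβ (|t| + 1))
      fun b s hs => ?_
    have hΓ := Gamma_natCast_mul_add_one_pos hβ b
    rw [norm_div, norm_pow, Real.norm_eq_abs, Real.norm_of_nonneg hΓ.le]
    gcongr
    exact abs_le.2 hs
  exact hcont.continuousAt
    (Icc_mem_nhds (by linarith [neg_abs_le t]) (by linarith [le_abs_self t]))

theorem monotoneOn_mittagLeffler (hβ : 0 < β) : MonotoneOn (mittagLeffler β) (Ici 0) := by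
  intro s (hs : 0 ≤ s) t _ hst
  refine (summable_mittagLeffler hβ s).tsum_le_tsum (fun b => ?_) (summable_mittagLeffler hβ t)
  have := Gamma_natCast_mul_add_one_pos hβ b
  gcongr

theorem mittagLeffler_zero (β : ℝ) : mittagLeffler β 0 = 1 := by
  rw [mittagLeffler, tsum_eq_single 0 fun b hb => by simp [hb]]
  simp

theorem one_le_mittagLeffler (hβ : 0 < β) {t : ℝ} (ht : 0 ≤ t) : 1 ≤ mittagLeffler β t :=
  mittagLeffler_zero β ▸ monotoneOn_mittagLeffler hβ self_mem_Ici ht ht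

theorem hasSum_mittagLeffler_mul_rpow (hβ : 0 < β) (θ : ℝ) {r : ℝ} (hr : 0 ≤ r) :
    HasSum (fun b : ℕ => θ ^ b / Real.Gamma (b * β + 1) * r ^ (b * β))
      (mittagLeffler β (θ * r ^ β)) := by
  have hterm : ∀ b : ℕ, (θ * r ^ β) ^ b / Real.Gamma (b * β + 1) =
      θ ^ b / Real.Gamma (b * β + 1) * r ^ (b * β) := fun b => by
    rw [mul_pow, ← Real.rpow_mul_natCast hr, mul_comm β, div_mul_eq_mul_div]
  simpa only [mittagLeffler, hterm] using (summable_mittagLeffler hβ (θ * r ^ β)).hasSum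

end MittagLeffler

section Weight

variable {β t₀ θ : ℝ}

theorem weight_of_ge (hβ : 0 < β) {s : ℝ} (hs : t₀ ≤ s) :
    weight β t₀ θ s = mittagLeffler β (θ * (s - t₀) ^ β) := by
  rcases hs.eq_or_lt with rfl | hlt
  · simp [weight, Real.zero_rpow hβ.ne', mittagLeffler_zero]
  · exact if_neg hlt.not_ge

theorem one_le_weight (hβ : 0 < β) (hθ : 0 ≤ θ) (s : ℝ) : 1 ≤ weight β t₀ θ s := by
  rcases le_total s t₀ with hs | hs
  · exact (if_pos hs).ge
  · have := sub_nonneg.2 hs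
    rw [weight_of_ge hβ hs]
    exact one_le_mittagLeffler hβ (by positivity)

theorem monotone_weight (hβ : 0 < β) (hθ : 0 ≤ θ) : Monotone (weight β t₀ θ) := by
  intro s t hst
  rcases le_total s t₀ with hs | hs
  · exact (if_pos hs).trans_le (one_le_weight hβ hθ t)
  · have := sub_nonneg.2 hs
    have := sub_nonneg.2 (hs.trans hst)
    rw [weight_of_ge hβ hs, weight_of_ge hβ (hs.trans hst)]
    refine monotoneOn_mittagLeffler hβ (mem_Ici.2 (by positivity)) (mem_Ici.2 (by positivity)) ?_
    gcongr

end Weight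

section FractionalIntegral

variable {E : Type*} [NormedAddCommGroup E] [NormedSpace ℝ E]

/-- The Riemann–Liouville fractional integral
`(I^β F)(t) = (1/Γ(β)) ∫_{t₀}^t (t-s)^{β-1} F(s) ds` of order `β` based at `t₀`. -/
noncomputable def fractionalIntegral (β t₀ : ℝ) (F : ℝ → E) (t : ℝ) : E :=
  (Real.Gamma β)⁻¹ • ∫ s in t₀..t, (t - s) ^ (β - 1) • F s

variable {β t₀ t : ℝ}

theorem intervalIntegrable_sub_rpow_smul (hβ : 0 < β) (ht : t₀ ≤ t) {F : ℝ → E}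
    (hF : ContinuousOn F (Icc t₀ t)) :
    IntervalIntegrable (fun s => (t - s) ^ (β - 1) • F s) volume t₀ t := by
  have hker : IntervalIntegrable (fun s : ℝ => (t - s) ^ (β - 1)) volume t₀ t := by
    simpa using (intervalIntegrable_rpow' (a := t - t₀) (b := 0)
      (show -1 < β - 1 by linarith)).comp_sub_left t
  exact hker.smul_continuousOn (by rwa [uIcc_of_le ht])

theorem fractionalIntegral_sub (hβ : 0 < β) (ht : t₀ ≤ t) {F G : ℝ → E}
    (hF : ContinuousOn F (Icc t₀ t)) (hG : ContinuousOn G (Icc t₀ t)) :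
    fractionalIntegral β t₀ (fun s => F s - G s) t =
      fractionalIntegral β t₀ F t - fractionalIntegral β t₀ G t := by
  simp only [fractionalIntegral, smul_sub]
  rw [intervalIntegral.integral_sub (intervalIntegrable_sub_rpow_smul hβ ht hF)
    (intervalIntegrable_sub_rpow_smul hβ ht hG), smul_sub]

theorem fractionalIntegral_const_mul (c : ℝ) (φ : ℝ → ℝ) :
    fractionalIntegral β t₀ (fun s => c * φ s) t = c * fractionalIntegral β t₀ φ t := by
  simp only [fractionalIntegral, smul_eq_mul, mul_left_comm _ c,
    intervalIntegral.integral_const_mul]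

theorem norm_fractionalIntegral_le (hβ : 0 < β) (ht : t₀ ≤ t) {F : ℝ → E} {φ : ℝ → ℝ}
    (hφ : ContinuousOn φ (Icc t₀ t)) (hF : ∀ s ∈ Icc t₀ t, ‖F s‖ ≤ φ s) :
    ‖fractionalIntegral β t₀ F t‖ ≤ fractionalIntegral β t₀ φ t := by
  have := Real.Gamma_pos_of_pos hβ
  rw [fractionalIntegral, norm_smul, Real.norm_of_nonneg (by positivity)]
  refine mul_le_mul_of_nonneg_left (intervalIntegral.norm_integral_le_of_norm_le ht
    (.of_forall fun s hs => ?_) (intervalIntegrable_sub_rpow_smul hβ ht hφ)) (by positivity)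
  have hker : 0 ≤ (t - s) ^ (β - 1) := Real.rpow_nonneg (sub_nonneg.2 hs.2) _
  rw [norm_smul, Real.norm_of_nonneg hker, smul_eq_mul]
  exact mul_le_mul_of_nonneg_left (hF s (Ioc_subset_Icc_self hs)) hker

/-- The substitution `s = t₀ + (t - t₀) u` moves the singularity of the kernel to the fixed
point `u = 1`. -/
theorem fractionalIntegral_eq_rpow_smul_integral (hβ : 0 < β) (ht : t₀ ≤ t) (F : ℝ → E) :
    fractionalIntegral β t₀ F t = (Real.Gamma β)⁻¹ • (t - t₀) ^ β •
      ∫ u in (0 : ℝ)..1, (1 - u) ^ (β - 1) • F (t₀ + (t - t₀) * u) := by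
  rw [fractionalIntegral]
  congr 1
  rcases ht.eq_or_lt with rfl | hlt
  · simp [Real.zero_rpow hβ.ne']
  have hpos : 0 < t - t₀ := sub_pos.2 hlt
  have hsubst := smul_integral_comp_add_mul (a := 0) (b := 1)
    (fun s => (t - s) ^ (β - 1) • F s) (t - t₀) t₀
  simp only [mul_zero, add_zero, mul_one, add_sub_cancel] at hsubst
  rw [← hsubst, ← intervalIntegral.integral_smul, ← intervalIntegral.integral_smul]
  refine intervalIntegral.integral_congr fun u hu => ?_
  rw [uIcc_of_le zero_le_one] at hu
  have hker : (t - t₀) * (t - (t₀ + (t - t₀) * u)) ^ (β - 1) =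
      (t - t₀) ^ β * (1 - u) ^ (β - 1) := by
    rw [show t - (t₀ + (t - t₀) * u) = (t - t₀) * (1 - u) by ring,
      Real.mul_rpow hpos.le (sub_nonneg.2 hu.2), ← mul_assoc, Real.rpow_sub_one hpos.ne',
      mul_div_cancel₀ _ hpos.ne']
  simp only [smul_smul, hker]

theorem continuousOn_fractionalIntegral {T : ℝ} (hβ : 0 < β) {F : ℝ → E}
    (hF : ContinuousOn F (Icc t₀ T)) :
    ContinuousOn (fractionalIntegral β t₀ F) (Icc t₀ T) := by
  obtain ⟨M, hM⟩ := isCompact_Icc.exists_bound_of_continuousOn hF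
  have hmem : ∀ t ∈ Icc t₀ T, ∀ u ∈ Icc (0 : ℝ) 1, t₀ + (t - t₀) * u ∈ Icc t₀ T :=
    fun t ht u hu => ⟨by nlinarith [ht.1, hu.1], by nlinarith [ht.1, ht.2, hu.2]⟩
  have hunit : uIoc (0 : ℝ) 1 ⊆ Icc 0 1 := uIoc_of_le (zero_le_one (α := ℝ)) ▸ Ioc_subset_Icc_self
  have hint : ContinuousOn
      (fun t => ∫ u in (0 : ℝ)..1, (1 - u) ^ (β - 1) • F (t₀ + (t - t₀) * u)) (Icc t₀ T) := by
    refine fun t ht => intervalIntegral.continuousWithinAt_of_dominated_interval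
      (bound := fun u => (1 - u) ^ (β - 1) • M) ?_ ?_
      (intervalIntegrable_sub_rpow_smul hβ zero_le_one continuousOn_const)
      (.of_forall fun u hu => ?_)
    · filter_upwards [self_mem_nhdsWithin] with r hr
      rw [uIoc_of_le zero_le_one]
      exact (intervalIntegrable_sub_rpow_smul hβ zero_le_one
        (hF.comp (by fun_prop) (hmem r hr))).1.aestronglyMeasurable
    · filter_upwards [self_mem_nhdsWithin] with r hr
      refine .of_forall fun u hu => ?_
      have hker : 0 ≤ (1 - u) ^ (β - 1) := Real.rpow_nonneg (sub_nonneg.2 (hunit hu).2) _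
      rw [norm_smul, Real.norm_of_nonneg hker, smul_eq_mul]
      exact mul_le_mul_of_nonneg_left (hM _ (hmem r hr u (hunit hu))) hker
    · exact ((hF.comp (by fun_prop) fun r hr => hmem r hr u (hunit hu)) t ht).const_smul _
  have hpow : Continuous fun t : ℝ => (t - t₀) ^ β :=
    (continuous_id.sub continuous_const).rpow_const fun _ => Or.inr hβ.le
  exact ((hpow.continuousOn.smul hint).const_smul _).congr fun t ht =>
    fractionalIntegral_eq_rpow_smul_integral hβ ht.1 F

theorem hasSum_fractionalIntegral {ι : Type*} [Countable ι] (hβ : 0 < β) (ht : t₀ ≤ t)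
    {F : ι → ℝ → E} {G : ℝ → E} {M : ι → ℝ} (hF : ∀ b, ContinuousOn (F b) (Icc t₀ t))
    (hM : Summable M) (hFM : ∀ b, ∀ s ∈ Icc t₀ t, ‖F b s‖ ≤ M b)
    (hFG : ∀ s ∈ Icc t₀ t, HasSum (fun b => F b s) (G s)) :
    HasSum (fun b => fractionalIntegral β t₀ (F b) t) (fractionalIntegral β t₀ G t) := by
  have hsub : uIoc t₀ t ⊆ Icc t₀ t := uIoc_of_le ht ▸ Ioc_subset_Icc_self
  refine (intervalIntegral.hasSum_integral_of_dominated_convergence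
    (fun b s => (t - s) ^ (β - 1) * M b) (fun b => ?_) (fun b => .of_forall fun s hs => ?_)
    (.of_forall fun s _ => hM.mul_left _) ?_
    (.of_forall fun s hs => (hFG s (hsub hs)).const_smul _)).const_smul _
  · rw [uIoc_of_le ht]
    exact (intervalIntegrable_sub_rpow_smul hβ ht (hF b)).1.aestronglyMeasurable
  · have hker : 0 ≤ (t - s) ^ (β - 1) := Real.rpow_nonneg (sub_nonneg.2 (hsub hs).2) _
    rw [norm_smul, Real.norm_of_nonneg hker]
    exact mul_le_mul_of_nonneg_left (hFM b s (hsub hs)) hker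
  · simp only [tsum_mul_left]
    exact intervalIntegrable_sub_rpow_smul hβ ht continuousOn_const

theorem integral_one_sub_rpow_mul_rpow {α : ℝ} (hα : 0 < α) (hβ : 0 < β) :
    ∫ u in (0 : ℝ)..1, (1 - u) ^ (β - 1) * u ^ (α - 1) = ProbabilityTheory.beta α β := by
  apply Complex.ofReal_injective
  have hbeta := Complex.betaIntegral_eq_Gamma_mul_div (α : ℂ) (β : ℂ) (by simpa) (by simpa)
  rw [ProbabilityTheory.beta]
  push_cast [← Complex.Gamma_ofReal]
  rw [← hbeta, Complex.betaIntegral, ← intervalIntegral.integral_ofReal]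
  refine intervalIntegral.integral_congr fun u hu => ?_
  rw [uIcc_of_le zero_le_one] at hu
  simp [Complex.ofReal_cpow hu.1, Complex.ofReal_cpow (sub_nonneg.2 hu.2), mul_comm]

theorem fractionalIntegral_sub_rpow {γ : ℝ} (hβ : 0 < β) (hγ : -1 < γ) (ht : t₀ < t) :
    fractionalIntegral β t₀ (fun s => (s - t₀) ^ γ) t =
      Real.Gamma (γ + 1) / Real.Gamma (γ + β + 1) * (t - t₀) ^ (γ + β) := by
  have hpos : 0 < t - t₀ := sub_pos.2 ht
  have := Real.Gamma_pos_of_pos hβ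
  have hscale : ∫ u in (0 : ℝ)..1, (1 - u) ^ (β - 1) * (t₀ + (t - t₀) * u - t₀) ^ γ =
      (t - t₀) ^ γ * ∫ u in (0 : ℝ)..1, (1 - u) ^ (β - 1) * u ^ (γ + 1 - 1) := by
    rw [← intervalIntegral.integral_const_mul]
    refine intervalIntegral.integral_congr fun u hu => ?_
    rw [uIcc_of_le zero_le_one] at hu
    simp only [add_sub_cancel_left, add_sub_cancel_right]
    rw [Real.mul_rpow hpos.le hu.1, mul_left_comm]
  simp only [fractionalIntegral_eq_rpow_smul_integral hβ ht.le, smul_eq_mul]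
  rw [hscale, integral_one_sub_rpow_mul_rpow (by linarith) hβ, ProbabilityTheory.beta,
    Real.rpow_add hpos, add_right_comm]
  field_simp

theorem mul_fractionalIntegral_mittagLeffler (hβ : 0 < β) (θ : ℝ) (ht : t₀ ≤ t) :
    θ * fractionalIntegral β t₀ (fun s => mittagLeffler β (θ * (s - t₀) ^ β)) t =
      mittagLeffler β (θ * (t - t₀) ^ β) - 1 := by
  rcases ht.eq_or_lt with rfl | hlt
  · simp [fractionalIntegral, Real.zero_rpow hβ.ne', mittagLeffler_zero]
  set summand : ℕ → ℝ → ℝ := fun b s => θ ^ b / Real.Gamma (b * β + 1) * (s - t₀) ^ (b * β)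
  have hsummand : ∀ b, θ * fractionalIntegral β t₀ (summand b) t = summand (b + 1) t := fun b => by
    have := Gamma_natCast_mul_add_one_pos hβ b
    have hbβ : -1 < b * β := neg_one_lt_zero.trans_le (by positivity)
    simp only [summand]
    rw [fractionalIntegral_const_mul, fractionalIntegral_sub_rpow hβ hbβ hlt,
      show ((b + 1 : ℕ) : ℝ) * β = b * β + β by push_cast; ring]
    field_simp
    ring
  have hcont : ∀ b, ContinuousOn (summand b) (Icc t₀ t) := fun b =>
    (((continuous_id.sub continuous_const).rpow_const fun _ =>
      Or.inr (by positivity)).const_mul _).continuousOn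
  have hbound : ∀ b, ∀ s ∈ Icc t₀ t,
      ‖summand b s‖ ≤ |θ| ^ b / Real.Gamma (b * β + 1) * (t - t₀) ^ (b * β) := fun b s hs => by
    have hΓ := Gamma_natCast_mul_add_one_pos hβ b
    have := sub_nonneg.2 hs.1
    rw [norm_mul, norm_div, norm_pow, Real.norm_eq_abs, Real.norm_of_nonneg hΓ.le,
      Real.norm_of_nonneg (by positivity)]
    gcongr
    exact hs.2
  have hintegrated := (hasSum_fractionalIntegral hβ ht hcont
    (hasSum_mittagLeffler_mul_rpow hβ |θ| (sub_nonneg.2 ht)).summable hbound fun s hs =>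
      hasSum_mittagLeffler_mul_rpow hβ θ (sub_nonneg.2 hs.1)).mul_left θ
  simp only [hsummand] at hintegrated
  have htail := (hasSum_nat_add_iff' 1).2 (hasSum_mittagLeffler_mul_rpow hβ θ (sub_nonneg.2 ht))
  simpa using hintegrated.unique htail

theorem norm_fractionalIntegral_le_mul_weight {θ C : ℝ} (hβ : 0 < β) (hθ : 0 < θ) (hC : 0 ≤ C)
    (ht : t₀ ≤ t) {F : ℝ → E} (hF : ∀ s ∈ Icc t₀ t, ‖F s‖ ≤ C * weight β t₀ θ s) :
    ‖fractionalIntegral β t₀ F t‖ ≤ C / θ * weight β t₀ θ t := by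
  have hcont : Continuous fun s => C * mittagLeffler β (θ * (s - t₀) ^ β) :=
    ((continuous_mittagLeffler hβ).comp (((continuous_id.sub continuous_const).rpow_const
      fun _ => Or.inr hβ.le).const_mul θ)).const_mul C
  calc ‖fractionalIntegral β t₀ F t‖
      ≤ fractionalIntegral β t₀ (fun s => C * mittagLeffler β (θ * (s - t₀) ^ β)) t :=
        norm_fractionalIntegral_le hβ ht hcont.continuousOn fun s hs =>
          weight_of_ge hβ hs.1 ▸ hF s hs
    _ = C / θ * (weight β t₀ θ t - 1) := by
        rw [fractionalIntegral_const_mul, weight_of_ge hβ ht,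
          ← mul_fractionalIntegral_mittagLeffler hβ θ ht]
        field_simp
    _ ≤ C / θ * weight β t₀ θ t := by gcongr; linarith

end FractionalIntegral

section GenDist

variable {n : ℕ} {β t₀ T g θ : ℝ} {x₁ x₂ : ℝ → Euc n}

theorem genDist_le_ofReal {C : ℝ} (hC : 0 ≤ C)
    (h : ∀ t ∈ Icc (t₀ - g) T, ‖x₁ t - x₂ t‖ ≤ C * weight β t₀ θ t) :
    genDist β t₀ T g θ x₁ x₂ ≤ ENNReal.ofReal C := by
  refine sInf_le fun t ht => ?_
  rw [← ENNReal.ofReal_mul hC, ← enorm_eq_nnnorm, ← ofReal_norm]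
  exact ENNReal.ofReal_le_ofReal (h t ht)

theorem genDist_ne_top (hβ : 0 < β) (hθ : 0 ≤ θ) (hx₁ : ContinuousOn x₁ (Icc (t₀ - g) T))
    (hx₂ : ContinuousOn x₂ (Icc (t₀ - g) T)) : genDist β t₀ T g θ x₁ x₂ ≠ ∞ := by
  obtain ⟨M, hM⟩ := isCompact_Icc.exists_bound_of_continuousOn (hx₁.sub hx₂)
  refine ne_top_of_le_ne_top ENNReal.ofReal_ne_top
    (genDist_le_ofReal (le_max_right M 0) fun t ht => ?_)
  calc ‖x₁ t - x₂ t‖ ≤ max M 0 := (hM t ht).trans (le_max_left _ _)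
    _ ≤ max M 0 * weight β t₀ θ t :=
      le_mul_of_one_le_right (le_max_right _ _) (one_le_weight hβ hθ t)

theorem norm_sub_le_toReal_genDist_mul_weight (hβ : 0 < β) (hθ : 0 ≤ θ)
    (htop : genDist β t₀ T g θ x₁ x₂ ≠ ∞) {t : ℝ} (ht : t ∈ Icc (t₀ - g) T) :
    ‖x₁ t - x₂ t‖ ≤ (genDist β t₀ T g θ x₁ x₂).toReal * weight β t₀ θ t := by
  have hw : 0 < weight β t₀ θ t := one_pos.trans_le (one_le_weight hβ hθ t)
  rw [← div_le_iff₀ hw, ← ENNReal.ofReal_le_iff_le_toReal htop]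
  refine le_sInf fun b hb => ?_
  rw [ENNReal.ofReal_div_of_pos hw, ofReal_norm, enorm_eq_nnnorm]
  exact ENNReal.div_le_of_le_mul (hb t ht)

end GenDist

section DelayedRHS

variable {E V : Type*} [NormedAddCommGroup E] [NormedSpace ℝ E] [NormedAddCommGroup V]
  [NormedSpace ℝ V]

/-- The right-hand side `A₀ y(s) + A₁ y(s - g(s)) + A₂ d(s) + f(s, y(s), y(s - g(s)), d(s))` of
the delayed system along the trajectory `y`; the delay `g(·)` is `gdel`. -/
def delayedRHS (A₀ A₁ : E →L[ℝ] E) (A₂ : V →L[ℝ] E) (f : ℝ → E → E → V → E) (d : ℝ → V)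
    (gdel : ℝ → ℝ) (y : ℝ → E) (s : ℝ) : E :=
  A₀ (y s) + A₁ (y (s - gdel s)) + A₂ (d s) + f s (y s) (y (s - gdel s)) (d s)

variable {A₀ A₁ : E →L[ℝ] E} {A₂ : V →L[ℝ] E} {f : ℝ → E → E → V → E} {d : ℝ → V} {gdel : ℝ → ℝ}

theorem continuousOn_delayedRHS {I J : Set ℝ} {y : ℝ → E} (hIJ : I ⊆ J)
    (hdelay : MapsTo (fun s => s - gdel s) I J) (hgdel : ContinuousOn gdel I)
    (hf : ContinuousOn (fun q : ℝ × E × E × V => f q.1 q.2.1 q.2.2.1 q.2.2.2) (I ×ˢ univ))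
    (hd : ContinuousOn d I) (hy : ContinuousOn y J) :
    ContinuousOn (delayedRHS A₀ A₁ A₂ f d gdel y) I := by
  have hy₀ : ContinuousOn y I := hy.mono hIJ
  have hy₁ : ContinuousOn (fun s => y (s - gdel s)) I := hy.comp (continuousOn_id.sub hgdel) hdelay
  exact (((A₀.continuous.comp_continuousOn hy₀).add (A₁.continuous.comp_continuousOn hy₁)).add
    (A₂.continuous.comp_continuousOn hd)).add
    (hf.comp (continuousOn_id.prodMk (hy₀.prodMk (hy₁.prodMk hd))) fun s hs => ⟨hs, mem_univ _⟩)

theorem norm_delayedRHS_sub_le {k s : ℝ}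
    (hf : ∀ (u₁ u₂ w₁ w₂ : E) (v : V),
      ‖f s u₁ u₂ v - f s w₁ w₂ v‖ ≤ k * (‖u₁ - w₁‖ + ‖u₂ - w₂‖)) (x₁ x₂ : ℝ → E) :
    ‖delayedRHS A₀ A₁ A₂ f d gdel x₁ s - delayedRHS A₀ A₁ A₂ f d gdel x₂ s‖ ≤
      (‖A₀‖ + k) * ‖x₁ s - x₂ s‖ + (‖A₁‖ + k) * ‖x₁ (s - gdel s) - x₂ (s - gdel s)‖ := by
  calc ‖delayedRHS A₀ A₁ A₂ f d gdel x₁ s - delayedRHS A₀ A₁ A₂ f d gdel x₂ s‖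
      = ‖A₀ (x₁ s - x₂ s) + A₁ (x₁ (s - gdel s) - x₂ (s - gdel s)) +
          (f s (x₁ s) (x₁ (s - gdel s)) (d s) - f s (x₂ s) (x₂ (s - gdel s)) (d s))‖ := by
        rw [delayedRHS, delayedRHS, map_sub, map_sub]
        congr 1
        abel
    _ ≤ ‖A₀‖ * ‖x₁ s - x₂ s‖ + ‖A₁‖ * ‖x₁ (s - gdel s) - x₂ (s - gdel s)‖ +
          k * (‖x₁ s - x₂ s‖ + ‖x₁ (s - gdel s) - x₂ (s - gdel s)‖) :=
        norm_add_le_of_le (norm_add_le_of_le (A₀.le_opNorm _) (A₁.le_opNorm _)) (hf _ _ _ _ _)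
    _ = (‖A₀‖ + k) * ‖x₁ s - x₂ s‖ +
          (‖A₁‖ + k) * ‖x₁ (s - gdel s) - x₂ (s - gdel s)‖ := by ring

theorem norm_delayedRHS_sub_le_mul_weight {β t₀ θ a₀ a₁ k B s : ℝ} {x₁ x₂ : ℝ → E}
    (hβ : 0 < β) (hθ : 0 ≤ θ) (hB : 0 ≤ B) (hgdel : 0 ≤ gdel s)
    (ha₀_nonneg : 0 ≤ a₀) (ha₁_nonneg : 0 ≤ a₁) (ha₀ : ‖A₀‖ + k ≤ a₀) (ha₁ : ‖A₁‖ + k ≤ a₁)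
    (hf : ∀ (u₁ u₂ w₁ w₂ : E) (v : V),
      ‖f s u₁ u₂ v - f s w₁ w₂ v‖ ≤ k * (‖u₁ - w₁‖ + ‖u₂ - w₂‖))
    (hx : ‖x₁ s - x₂ s‖ ≤ B * weight β t₀ θ s)
    (hx_delay : ‖x₁ (s - gdel s) - x₂ (s - gdel s)‖ ≤ B * weight β t₀ θ (s - gdel s)) :
    ‖delayedRHS A₀ A₁ A₂ f d gdel x₁ s - delayedRHS A₀ A₁ A₂ f d gdel x₂ s‖ ≤
      (a₀ + a₁) * B * weight β t₀ θ s := by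
  have hweight : weight β t₀ θ (s - gdel s) ≤ weight β t₀ θ s :=
    monotone_weight hβ hθ (sub_le_self s hgdel)
  calc ‖delayedRHS A₀ A₁ A₂ f d gdel x₁ s - delayedRHS A₀ A₁ A₂ f d gdel x₂ s‖
      ≤ (‖A₀‖ + k) * ‖x₁ s - x₂ s‖ + (‖A₁‖ + k) * ‖x₁ (s - gdel s) - x₂ (s - gdel s)‖ :=
        norm_delayedRHS_sub_le hf x₁ x₂
    _ ≤ a₀ * (B * weight β t₀ θ s) + a₁ * (B * weight β t₀ θ s) := by
        gcongr
        exact hx_delay.trans (by gcongr)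
    _ = (a₀ + a₁) * B * weight β t₀ θ s := by ring

end DelayedRHS

section Vop

variable {n p : ℕ} {β t₀ : ℝ} {A₀ A₁ : Euc n →L[ℝ] Euc n} {A₂ : Euc p →L[ℝ] Euc n}
  {f : ℝ → Euc n → Euc n → Euc p → Euc n} {d : ℝ → Euc p} {gdel : ℝ → ℝ} {ν : ℝ → Euc n}

theorem Vop_of_le (y : ℝ → Euc n) {t : ℝ} (ht : t ≤ t₀) :
    Vop β t₀ A₀ A₁ A₂ f d gdel ν y t = ν t :=
  if_pos ht

theorem Vop_of_ge (y : ℝ → Euc n) {t : ℝ} (ht : t₀ ≤ t) :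
    Vop β t₀ A₀ A₁ A₂ f d gdel ν y t =
      ν t₀ + fractionalIntegral β t₀ (delayedRHS A₀ A₁ A₂ f d gdel y) t := by
  rcases ht.eq_or_lt with rfl | hlt
  · simp [Vop, fractionalIntegral]
  · exact if_neg hlt.not_ge

theorem continuousOn_Vop {r T : ℝ} {y : ℝ → Euc n} (hβ : 0 < β) (hr : r ≤ t₀) (hT : t₀ ≤ T)
    (hν : ContinuousOn ν (Icc r t₀))
    (hrhs : ContinuousOn (delayedRHS A₀ A₁ A₂ f d gdel y) (Icc t₀ T)) :
    ContinuousOn (Vop β t₀ A₀ A₁ A₂ f d gdel ν y) (Icc r T) := by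
  rw [← Icc_union_Icc_eq_Icc hr hT]
  exact (hν.congr fun t ht => Vop_of_le y ht.2).union_of_isClosed
    ((continuousOn_const.add (continuousOn_fractionalIntegral hβ hrhs)).congr
      fun t ht => Vop_of_ge y ht.1) isClosed_Icc isClosed_Icc

theorem norm_Vop_sub_le {θ C T t : ℝ} {x₁ x₂ : ℝ → Euc n} (hβ : 0 < β) (hθ : 0 < θ) (hC : 0 ≤ C)
    (ht : t ≤ T) (hx₁ : ContinuousOn (delayedRHS A₀ A₁ A₂ f d gdel x₁) (Icc t₀ T))
    (hx₂ : ContinuousOn (delayedRHS A₀ A₁ A₂ f d gdel x₂) (Icc t₀ T))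
    (h : ∀ s ∈ Icc t₀ T,
      ‖delayedRHS A₀ A₁ A₂ f d gdel x₁ s - delayedRHS A₀ A₁ A₂ f d gdel x₂ s‖ ≤
        C * weight β t₀ θ s) :
    ‖Vop β t₀ A₀ A₁ A₂ f d gdel ν x₁ t - Vop β t₀ A₀ A₁ A₂ f d gdel ν x₂ t‖ ≤
      C / θ * weight β t₀ θ t := by
  rcases le_total t t₀ with ht₀ | ht₀
  · have := one_le_weight (t₀ := t₀) hβ hθ.le t
    rw [Vop_of_le _ ht₀, Vop_of_le _ ht₀, sub_self, norm_zero]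
    positivity
  · have hsub : Icc t₀ t ⊆ Icc t₀ T := Icc_subset_Icc_right ht
    rw [Vop_of_ge _ ht₀, Vop_of_ge _ ht₀, add_sub_add_left_eq_sub,
      ← fractionalIntegral_sub hβ ht₀ (hx₁.mono hsub) (hx₂.mono hsub)]
    exact norm_fractionalIntegral_le_mul_weight hβ hθ hC ht₀ fun s hs => h s (hsub hs)

end Vop

theorem Vop_strictly_contractive_general {n p : ℕ} {β t₀ T g η : ℝ}
    (hβ : 0 < β) (hT : t₀ ≤ T) (hη : 0 < η)
    {gdel : ℝ → ℝ} (hgdel_cont : ContinuousOn gdel (Icc t₀ T))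
    (hgdel_mem : ∀ t ∈ Icc t₀ T, gdel t ∈ Icc 0 g)
    {A₀ A₁ : Euc n →L[ℝ] Euc n} {A₂ : Euc p →L[ℝ] Euc n}
    {κ : ℝ → ℝ} (hκ_nonneg : ∀ s ∈ Icc t₀ T, 0 ≤ κ s)
    {f : ℝ → Euc n → Euc n → Euc p → Euc n}
    (hf_cont : ContinuousOn (fun q : ℝ × Euc n × Euc n × Euc p => f q.1 q.2.1 q.2.2.1 q.2.2.2)
      (Icc t₀ T ×ˢ univ))
    (hf_lip : ∀ s ∈ Icc t₀ T, ∀ (u₁ u₂ w₁ w₂ : Euc n) (v : Euc p),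
      ‖f s u₁ u₂ v - f s w₁ w₂ v‖ ≤ κ s * (‖u₁ - w₁‖ + ‖u₂ - w₂‖))
    {d : ℝ → Euc p} (hd_cont : ContinuousOn d (Icc t₀ T))
    {ν : ℝ → Euc n} (hν : ContinuousOn ν (Icc (t₀ - g) t₀))
    {a₀ a₁ : ℝ} (ha₀ : ∀ s ∈ Icc t₀ T, ‖A₀‖ + κ s ≤ a₀) (ha₁ : ∀ s ∈ Icc t₀ T, ‖A₁‖ + κ s ≤ a₁) :
    (∀ y : ℝ → Euc n, ContinuousOn y (Icc (t₀ - g) T) →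
      ContinuousOn (Vop β t₀ A₀ A₁ A₂ f d gdel ν y) (Icc (t₀ - g) T)) ∧
    (∀ x₁ x₂ : ℝ → Euc n, ContinuousOn x₁ (Icc (t₀ - g) T) →
      ContinuousOn x₂ (Icc (t₀ - g) T) →
      genDist β t₀ T g (a₀ + a₁ + η)
          (Vop β t₀ A₀ A₁ A₂ f d gdel ν x₁) (Vop β t₀ A₀ A₁ A₂ f d gdel ν x₂) ≤
        ENNReal.ofReal ((a₀ + a₁) / (a₀ + a₁ + η)) * genDist β t₀ T g (a₀ + a₁ + η) x₁ x₂) := by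
  have ht₀ : t₀ ∈ Icc t₀ T := left_mem_Icc.2 hT
  have hg : t₀ - g ≤ t₀ := sub_le_self _ ((hgdel_mem t₀ ht₀).1.trans (hgdel_mem t₀ ht₀).2)
  have ha₀_nonneg : 0 ≤ a₀ := (add_nonneg (norm_nonneg _) (hκ_nonneg t₀ ht₀)).trans (ha₀ t₀ ht₀)
  have ha₁_nonneg : 0 ≤ a₁ := (add_nonneg (norm_nonneg _) (hκ_nonneg t₀ ht₀)).trans (ha₁ t₀ ht₀)
  have hsub : Icc t₀ T ⊆ Icc (t₀ - g) T := Icc_subset_Icc_left hg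
  have hdelay : MapsTo (fun s => s - gdel s) (Icc t₀ T) (Icc (t₀ - g) T) := fun s hs =>
    ⟨sub_le_sub hs.1 (hgdel_mem s hs).2, (sub_le_self s (hgdel_mem s hs).1).trans hs.2⟩
  have hrhs : ∀ y : ℝ → Euc n, ContinuousOn y (Icc (t₀ - g) T) →
      ContinuousOn (delayedRHS A₀ A₁ A₂ f d gdel y) (Icc t₀ T) := fun y =>
    continuousOn_delayedRHS hsub hdelay hgdel_cont hf_cont hd_cont
  refine ⟨fun y hy => continuousOn_Vop hβ hg hT hν (hrhs y hy), fun x₁ x₂ hx₁ hx₂ => ?_⟩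
  set θ := a₀ + a₁ + η
  have hθ : 0 < θ := by positivity
  have htop := genDist_ne_top hβ hθ.le hx₁ hx₂
  set B := (genDist β t₀ T g θ x₁ x₂).toReal with hB
  have hx : ∀ t ∈ Icc (t₀ - g) T, ‖x₁ t - x₂ t‖ ≤ B * weight β t₀ θ t := fun t ht =>
    norm_sub_le_toReal_genDist_mul_weight hβ hθ.le htop ht
  have hB_nonneg : 0 ≤ B := ENNReal.toReal_nonneg
  rw [← ENNReal.ofReal_toReal htop, ← hB, ← ENNReal.ofReal_mul (by positivity), div_mul_eq_mul_div]
  exact genDist_le_ofReal (by positivity) fun t ht =>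
    norm_Vop_sub_le hβ hθ (by positivity) ht.2 (hrhs x₁ hx₁) (hrhs x₂ hx₂) fun s hs =>
      norm_delayedRHS_sub_le_mul_weight hβ hθ.le hB_nonneg (hgdel_mem s hs).1 ha₀_nonneg
        ha₁_nonneg (ha₀ s hs) (ha₁ s hs) (hf_lip s hs) (hx s (hsub hs)) (hx _ (hdelay hs))

/-- Under the standing assumptions on the fractional delayed system, the operator `𝒱`
maps `E = C([t₀ − g, T], ℝⁿ)` into itself and is strictly contractive for the weighted
generalized metric `ϖ` with weight `h(s) = E_β((a₀+a₁+η)(s−t₀)^β)`: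
`ϖ(𝒱x₁, 𝒱x₂) ≤ ((a₀+a₁)/(a₀+a₁+η)) ϖ(x₁, x₂)`. -/
theorem Vop_strictly_contractive {n p : ℕ} (β t₀ T g η : ℝ)
    (hβ0 : 0 < β) (hβ1 : β < 1) (hT : t₀ < T) (hg : 0 ≤ g) (hη : 0 < η)
    (gdel : ℝ → ℝ) (hgdel_cont : ContinuousOn gdel (Icc t₀ T))
    (hgdel_mem : ∀ t ∈ Icc t₀ T, gdel t ∈ Icc 0 g)
    (A₀ A₁ : Euc n →L[ℝ] Euc n) (A₂ : Euc p →L[ℝ] Euc n)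
    (κ : ℝ → ℝ) (hκ_cont : Continuous κ) (hκ_nonneg : ∀ s, 0 ≤ κ s)
    (f : ℝ → Euc n → Euc n → Euc p → Euc n)
    (hf_cont : Continuous fun q : ℝ × Euc n × Euc n × Euc p => f q.1 q.2.1 q.2.2.1 q.2.2.2)
    (hf_lip : ∀ (s : ℝ) (u₁ u₂ : Euc n) (u₃ : Euc p) (w₁ w₂ : Euc n) (w₃ : Euc p),
      ‖f s u₁ u₂ u₃ - f s w₁ w₂ w₃‖ ≤ κ s * (‖u₁ - w₁‖ + ‖u₂ - w₂‖ + ‖u₃ - w₃‖))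
    (hf_zero : ∀ s : ℝ, f s 0 0 0 = 0)
    (ρ : ℝ) (hρ : 0 < ρ) (d : ℝ → Euc p) (hd_cont : Continuous d) (hd : ∀ t, ‖d t‖ ≤ ρ)
    (ν : ℝ → Euc n) (hν : ContinuousOn ν (Icc (t₀ - g) t₀))
    (a₀ a₁ a₂ : ℝ)
    (ha₀ : IsGreatest ((fun s => ‖A₀‖ + κ s) '' Icc t₀ T) a₀)
    (ha₁ : IsGreatest ((fun s => ‖A₁‖ + κ s) '' Icc t₀ T) a₁)
    (ha₂ : IsGreatest ((fun s => ‖A₂‖ + κ s) '' Icc t₀ T) a₂) :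
    (∀ y : ℝ → Euc n, ContinuousOn y (Icc (t₀ - g) T) →
      ContinuousOn (Vop β t₀ A₀ A₁ A₂ f d gdel ν y) (Icc (t₀ - g) T)) ∧
    (∀ x₁ x₂ : ℝ → Euc n, ContinuousOn x₁ (Icc (t₀ - g) T) →
      ContinuousOn x₂ (Icc (t₀ - g) T) →
      genDist β t₀ T g (a₀ + a₁ + η)
          (Vop β t₀ A₀ A₁ A₂ f d gdel ν x₁) (Vop β t₀ A₀ A₁ A₂ f d gdel ν x₂) ≤
        ENNReal.ofReal ((a₀ + a₁) / (a₀ + a₁ + η)) * genDist β t₀ T g (a₀ + a₁ + η) x₁ x₂) := by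
  exact Vop_strictly_contractive_general hβ0 hT.le hη hgdel_cont hgdel_mem (fun s _ => hκ_nonneg s)
    hf_cont.continuousOn (fun s _ u₁ u₂ w₁ w₂ v => by simpa using hf_lip s u₁ u₂ v w₁ w₂ v)
    hd_cont.continuousOn hν (fun s hs => ha₀.2 ⟨s, hs, rfl⟩) fun s hs => ha₁.2 ⟨s, hs, rfl⟩
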